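/- For a function $p$ of $y$ with derivative $p'$ and a parameter $m$, let $$A^{\mathrm{FN}}(\lambda;y)=\begin{bmatrix}-6i\lambda^2-3ip^2-iy & 6p\lambda+3ip'+m\lambda^{-1}\\ 6p\lambda-3ip'+m\lambda^{-1} & 6i\lambda^2+3ip^2+iy\end{bmatrix}$$ be the Flaschka–Newell matrix. For $\lambda\in\mathbb{C}$ with $\lambda\neq 0$ and $y\in\mathbb{R}$ with $y\neq 0$, define $$T_1(\lambda;y)=I_2+\frac{i}{2\lambda y}\begin{bmatrix}-1&-1\\1&1\end{bmatrix},\qquad A_0(\lambda;y)=\begin{bmatrix}-6i\lambda^2-iy&0\\0&6i\lambda^2+iy\end{bmatrix}$$ (the matrix $A^{\mathrm{FN}}$ with $p=0$, $p'=0$, $m=0$) and $$A_1(\lambda;y)=\begin{bmatrix}-6i\lambda^2-\frac{3i}{y^2}-iy & \frac{6\lambda}{y}-\frac{3i}{y^2}+\lambda^{-1}\\ \frac{6\lambda}{y}+\frac{3i}{y^2}+\lambda^{-1} & 6i\lambda^2+\frac{3i}{y^2}+iy\end{bmatrix}$$ (the matrix $A^{\mathrm{FN}}$ with $p=1/y$,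 $p'=-1/y^2$, $m=1$). Then $\dfrac{\partial T_1}{\partial\lambda}+T_1A_0=A_1T_1$, where $\partial T_1/\partial\lambda$ is the entrywise derivative of $T_1$ with respect to $\lambda$. -/

import Mathlib

open Complex Matrix

/-- The Flaschka–Newell matrix `A^FN(λ; y)` of a function `p` (with derivative `p'`) and a
parameter `m`. -/
noncomputable def AFN (p : ℝ → ℂ) (m : ℂ) (l : ℂ) (y : ℝ) : Matrix (Fin 2) (Fin 2) ℂ :=
  !![-6 * I * l ^ 2 - 3 * I * p y ^ 2 - I * (y : ℂ),
      6 * p y * l + 3 * I * deriv p y + m * l⁻¹;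
     6 * p y * l - 3 * I * deriv p y + m * l⁻¹,
      6 * I * l ^ 2 + 3 * I * p y ^ 2 + I * (y : ℂ)]

/-- The first-order Darboux transformation matrix `T₁(λ; y)`. -/
noncomputable def T1 (l : ℂ) (y : ℝ) : Matrix (Fin 2) (Fin 2) ℂ :=
  1 + (I / (2 * l * (y : ℂ))) • !![(-1 : ℂ), -1; 1, 1]

/-- The matrix `A^FN` with `p = 0`, `p' = 0`, `m = 0`, written out. -/
noncomputable def A0 (l : ℂ) (y : ℝ) : Matrix (Fin 2) (Fin 2) ℂ :=
  !![-6 * I * l ^ 2 - I * (y : ℂ), 0; 0, 6 * I * l ^ 2 + I * (y : ℂ)]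

/-- The matrix `A^FN` with `p = 1/y`, `p' = -1/y²`, `m = 1`, written out. -/
noncomputable def A1 (l : ℂ) (y : ℝ) : Matrix (Fin 2) (Fin 2) ℂ :=
  !![-6 * I * l ^ 2 - 3 * I / (y : ℂ) ^ 2 - I * (y : ℂ),
      6 * l / (y : ℂ) - 3 * I / (y : ℂ) ^ 2 + l⁻¹;
     6 * l / (y : ℂ) + 3 * I / (y : ℂ) ^ 2 + l⁻¹,
      6 * I * l ^ 2 + 3 * I / (y : ℂ) ^ 2 + I * (y : ℂ)]

/-- The entries of `T₁` written out. -/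
theorem T1_apply (l : ℂ) (y : ℝ) (i j : Fin 2) :
    T1 l y i j = (1 : Matrix (Fin 2) (Fin 2) ℂ) i j +
      I / (2 * l * (y : ℂ)) * !![(-1 : ℂ), -1; 1, 1] i j := by
  simp only [T1, Matrix.add_apply, Matrix.smul_apply, smul_eq_mul]

/-- The entrywise derivative of `T₁` with respect to the spectral parameter. -/
theorem hasDerivAt_T1_apply {l : ℂ} {y : ℝ} (hl : l ≠ 0) (hy : y ≠ 0) (i j : Fin 2) :
    HasDerivAt (fun z : ℂ => T1 z y i j)
      (-I / (2 * l ^ 2 * (y : ℂ)) * !![(-1 : ℂ), -1; 1, 1] i j) l := by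
  have hy' : (y : ℂ) ≠ 0 := ofReal_ne_zero.mpr hy
  have hden : HasDerivAt (fun z : ℂ => 2 * z * (y : ℂ)) (2 * (y : ℂ)) l := by
    simpa using ((hasDerivAt_id l).const_mul 2).mul_const (y : ℂ)
  have hquot := (hasDerivAt_const l I).div hden (by simp [hl, hy])
  simp only [T1_apply]
  refine ((hquot.mul_const _).const_add _).congr_deriv ?_
  congr 1
  field_simp
  ring

/-- The derivative of `s ↦ 1 / s` along the real line, with complex values. -/
theorem deriv_one_div_ofReal {y : ℝ} (hy : y ≠ 0) :
    deriv (fun s : ℝ => 1 / (s : ℂ)) y = -1 / (y : ℂ) ^ 2 := by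
  have hy' : (y : ℂ) ≠ 0 := ofReal_ne_zero.mpr hy
  have h := (hasDerivAt_inv hy').comp_ofReal
  simp only [one_div]
  rw [h.deriv, neg_div, one_div]

theorem AFN_zero (l : ℂ) (y : ℝ) : AFN (fun _ => 0) 0 l y = A0 l y := by
  simp [AFN, A0]

theorem AFN_one_div (l : ℂ) {y : ℝ} (hy : y ≠ 0) :
    AFN (fun s => 1 / (s : ℂ)) 1 l y = A1 l y := by
  simp only [AFN, A1, deriv_one_div_ofReal hy]
  congr 1
  ext i j
  fin_cases i <;> fin_cases j <;> simp <;> ring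

/-- For `λ ≠ 0`, `y ≠ 0`: `A₀` and `A₁` are the matrices `A^FN` of `p = 0, m = 0` and of
`p = 1/y, m = 1`, the matrix `T₁` is entrywise differentiable in `λ`, and
`∂T₁/∂λ + T₁ A₀ = A₁ T₁`. -/
theorem darboux_lambda_part_first_order (l : ℂ) (y : ℝ) (hl : l ≠ 0) (hy : y ≠ 0) :
    AFN (fun _ => 0) 0 l y = A0 l y ∧
    AFN (fun s => 1 / (s : ℂ)) 1 l y = A1 l y ∧
    (∀ i j, DifferentiableAt ℂ (fun z : ℂ => T1 z y i j) l) ∧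
    (Matrix.of fun i j => deriv (fun z : ℂ => T1 z y i j) l) + T1 l y * A0 l y =
      A1 l y * T1 l y := by
  refine ⟨AFN_zero l y, AFN_one_div l hy,
    fun i j => (hasDerivAt_T1_apply hl hy i j).differentiableAt, ?_⟩
  have hy' : (y : ℂ) ≠ 0 := ofReal_ne_zero.mpr hy
  simp only [(hasDerivAt_T1_apply hl hy _ _).deriv]
  rw [← Matrix.ext_iff]
  simp only [Matrix.add_apply, Matrix.of_apply, Matrix.mul_apply, Fin.sum_univ_two, T1_apply,
    A0, A1, Fin.forall_fin_two]
  refine ⟨⟨?_, ?_⟩, ?_, ?_⟩ <;> simp <;> field_simp <;> ring_nf <;> simp only [I_sq] <;> ring
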